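/- Let w : {1,…,n} → ℝ with w(j) > 0 for all j be a welfare basis function and n ∈ ℕ. Then the supremum of PoA(f,w,n) over all f ∈ ℝⁿ is attained: there exists f_opt ∈ ℝⁿ with f_opt(1) ≥ 1 such that PoA(f_opt, w, n) ≥ PoA(f, w, n) for every f ∈ ℝⁿ. -/

import Mathlib

/-!
The supremum is attained because `PoA` is upper semicontinuous in `f` on the slice `f 1 = 1` and
mechanisms of positive `PoA` in that slice lie in a compact box.

* If `f 1 ≤ 0`, a lone agent may stay idle, so `PoA f = 0` (`f_one_pos_of_PoA_pos`). If `f 1 > 0`,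
  the mechanism can be rescaled to `f 1 = 1` without changing the equilibria (`PoA_eq_of_scale`).
* If `f 1 = 1` and `|f j|` is large for some `j ≤ n`, then `PoA f` is small
  (`PoA_le_of_large`, `PoA_le_of_neg`): a large `f j` keeps `j` agents together on a resource of
  tiny value, and a very negative `f (j + 1)` keeps an agent from a bundle that contains a tiny
  resource already used by `j` agents.
* For upper semicontinuity (`eventually_PoA_lt`), take a game with a bad equilibrium for `f` and
  give every agent a private resource of value `ε` attached to its equilibrium choice. The
  equilibrium becomes strict, hence survives small perturbations of `f`, while the welfare ratio
  changes by `O(ε)`.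

All these games have only two choices per agent, an equilibrium one and an optimal one;
`PoA_le_two_action` is the resulting upper bound on `PoA`.
-/

/-- A resource allocation game with at most `n` agents: a finite resource set `R`,
a nonnegative value `v r` for each resource, `m ≤ n` agents, and for each agent a
nonempty finite collection of admissible choices (subsets of `R`). -/
structure RAGame (n : ℕ) where
  R : Type
  [fintypeR : Fintype R]
  [decEqR : DecidableEq R]
  v : R → ℝ
  v_nonneg : ∀ r, 0 ≤ v r
  m : ℕ
  m_le : m ≤ n
  A : Fin m → Finset (Finset R)
  A_ne : ∀ i, (A i).Nonempty

attribute [instance] RAGame.fintypeR RAGame.decEqR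

namespace RAGame

variable {n : ℕ}

/-- An allocation: each agent selects an admissible choice. -/
def Alloc (G : RAGame n) : Type := (i : Fin G.m) → {s : Finset G.R // s ∈ G.A i}

/-- `|a|_r`: the number of agents selecting resource `r` in allocation `a`. -/
def count (G : RAGame n) (a : G.Alloc) (r : G.R) : ℕ :=
  (Finset.univ.filter fun i => r ∈ (a i).val).card

/-- The welfare `W(a) = Σ_{r covered} v_r · w(|a|_r)`. -/
def welfare (G : RAGame n) (w : ℕ → ℝ) (a : G.Alloc) : ℝ :=
  ∑ r ∈ Finset.univ.filter (fun r => 0 < G.count a r), G.v r * w (G.count a r)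

/-- Agent `i`'s utility `U_i(a) = Σ_{r ∈ a_i} v_r · f(|a|_r)`. -/
def utility (G : RAGame n) (f : ℕ → ℝ) (a : G.Alloc) (i : Fin G.m) : ℝ :=
  ∑ r ∈ (a i).val, G.v r * f (G.count a r)

/-- Pure Nash equilibrium: no unilateral deviation improves an agent's utility. -/
def IsNash (G : RAGame n) (f : ℕ → ℝ) (a : G.Alloc) : Prop :=
  ∀ (i : Fin G.m) (s : {s : Finset G.R // s ∈ G.A i}),
    G.utility f (Function.update a i s) i ≤ G.utility f a i

/-- The optimal welfare `max_{a ∈ A} W(a)`. -/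
noncomputable def optVal (G : RAGame n) (w : ℕ → ℝ) : ℝ :=
  sSup { x : ℝ | ∃ a : G.Alloc, x = G.welfare w a }

/-- The worst equilibrium welfare `min_{a ∈ NE(G)} W(a)`. -/
noncomputable def worstNash (G : RAGame n) (f w : ℕ → ℝ) : ℝ :=
  sInf { x : ℝ | ∃ a : G.Alloc, G.IsNash f a ∧ x = G.welfare w a }

end RAGame

/-- The price of anarchy `PoA(f,w,n)` over the class `G_{f,w}^n` of games with at
most `n` agents and strictly positive optimal welfare. -/
noncomputable def PoA (f w : ℕ → ℝ) (n : ℕ) : ℝ :=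
  sInf { x : ℝ | ∃ G : RAGame n, 0 < G.optVal w ∧ x = G.worstNash f w / G.optVal w }

section TwoAction

variable {R : Type} [DecidableEq R] {m n : ℕ}

/-- The number of agents whose set in the profile `x` contains `r`; the analogue of
`RAGame.count` for a profile not tied to a game. -/
def cnt (x : Fin m → Finset R) (r : R) : ℕ :=
  (Finset.univ.filter fun i => r ∈ x i).card

/-- The welfare of a profile; the analogue of `RAGame.welfare`. -/
def wel [Fintype R] (v : R → ℝ) (w : ℕ → ℝ) (x : Fin m → Finset R) : ℝ :=
  ∑ r ∈ Finset.univ.filter (fun r => 0 < cnt x r), v r * w (cnt x r)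

lemma cnt_le (x : Fin m → Finset R) (r : R) : cnt x r ≤ m := by
  simpa [cnt] using Finset.card_le_univ (Finset.univ.filter fun i => r ∈ x i)

lemma wel_nonneg [Fintype R] {v : R → ℝ} {w : ℕ → ℝ} (hv : ∀ r, 0 ≤ v r) (hm : m ≤ n)
    (hw : ∀ j, 1 ≤ j → j ≤ n → 0 < w j) (x : Fin m → Finset R) : 0 ≤ wel v w x := by
  refine Finset.sum_nonneg fun r hr => mul_nonneg (hv r) (hw _ ?_ ?_).le
  · exact (Finset.mem_filter.1 hr).2
  · exact (cnt_le x r).trans hm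

lemma cnt_update (x : Fin m → Finset R) (i : Fin m) (s : Finset R) (r : R) (hr : r ∈ s) :
    cnt (Function.update x i s) r = if r ∈ x i then cnt x r else cnt x r + 1 := by
  have key : (Finset.univ.filter fun k => r ∈ Function.update x i s k)
      = insert i (Finset.univ.filter fun k => r ∈ x k) := by
    ext k
    by_cases hk : k = i
    · subst hk; simp [hr]
    · simp [hk]
  unfold cnt
  rw [key]
  split_ifs with h
  · rw [Finset.insert_eq_of_mem (by simpa using h)]
  · rw [Finset.card_insert_of_notMem (by simpa using h)]

end TwoAction

section Games

variable {n : ℕ} {w : ℕ → ℝ}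

lemma RAGame.welfare_eq (G : RAGame n) (a : G.Alloc) :
    G.welfare w a = wel G.v w (fun i => (a i).val) := rfl

lemma RAGame.utility_update (G : RAGame n) (f : ℕ → ℝ) (a : G.Alloc) (i : Fin G.m)
    (s : {s : Finset G.R // s ∈ G.A i}) :
    G.utility f (Function.update a i s) i =
      ∑ r ∈ s.val, G.v r * f (if r ∈ (a i).val then cnt (fun i => (a i).val) r
        else cnt (fun i => (a i).val) r + 1) := by
  unfold RAGame.utility
  have h0 : (Function.update a i s : G.Alloc) i = s := Function.update_self ..
  rw [h0]
  refine Finset.sum_congr rfl fun r hr => ?_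
  rw [← cnt_update (fun i => (a i).val) i s.val r hr]
  congr 3
  change cnt (fun k => ((Function.update a i s : G.Alloc) k).val) r = _
  congr 1
  funext k
  by_cases hk : k = i
  · subst hk
    rw [h0]; simp
  · have : (Function.update a i s : G.Alloc) k = a k := Function.update_of_ne hk ..
    rw [this]; simp [hk]

instance RAGame.finiteAlloc (G : RAGame n) : Finite G.Alloc := by
  unfold RAGame.Alloc; infer_instance

instance RAGame.nonemptyAlloc (G : RAGame n) : Nonempty G.Alloc :=
  ⟨fun i => ⟨(G.A_ne i).choose, (G.A_ne i).choose_spec⟩⟩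

lemma RAGame.finite_welfare (G : RAGame n) (w : ℕ → ℝ) :
    { x : ℝ | ∃ a : G.Alloc, x = G.welfare w a }.Finite :=
  (Set.finite_range (G.welfare w)).subset fun _ ⟨a, ha⟩ => ⟨a, ha.symm⟩

lemma RAGame.welfare_le_optVal (G : RAGame n) (b : G.Alloc) : G.welfare w b ≤ G.optVal w :=
  le_csSup (G.finite_welfare w).bddAbove ⟨b, rfl⟩

lemma RAGame.exists_optVal (G : RAGame n) (w : ℕ → ℝ) :
    ∃ b : G.Alloc, G.optVal w = G.welfare w b :=
  Set.Nonempty.csSup_mem (s := { x : ℝ | ∃ a : G.Alloc, x = G.welfare w a })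
    ⟨_, Classical.arbitrary G.Alloc, rfl⟩ (G.finite_welfare w)

lemma RAGame.welfare_nonneg (hw : ∀ j, 1 ≤ j → j ≤ n → 0 < w j) (G : RAGame n) (a : G.Alloc) :
    0 ≤ G.welfare w a :=
  wel_nonneg G.v_nonneg G.m_le hw _

lemma RAGame.worstNash_nonneg (hw : ∀ j, 1 ≤ j → j ≤ n → 0 < w j) (G : RAGame n)
    (f : ℕ → ℝ) : 0 ≤ G.worstNash f w := by
  refine Real.sInf_nonneg ?_
  rintro x ⟨a, -, rfl⟩
  exact G.welfare_nonneg hw a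

lemma PoA_nonneg (hw : ∀ j, 1 ≤ j → j ≤ n → 0 < w j) (f : ℕ → ℝ) : 0 ≤ PoA f w n := by
  refine Real.sInf_nonneg ?_
  rintro x ⟨G, hG, rfl⟩
  exact div_nonneg (G.worstNash_nonneg hw f) hG.le

lemma PoA_le_ratio (hw : ∀ j, 1 ≤ j → j ≤ n → 0 < w j) (f : ℕ → ℝ) (G : RAGame n)
    (hG : 0 < G.optVal w) : PoA f w n ≤ G.worstNash f w / G.optVal w := by
  refine csInf_le ⟨0, ?_⟩ ⟨G, hG, rfl⟩
  rintro x ⟨G, hG, rfl⟩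
  exact div_nonneg (G.worstNash_nonneg hw f) hG.le

/-- The game in which agent `i` chooses between `e i` and `o i`. If `e` is an equilibrium, the
price of anarchy is at most the ratio of the welfares of `e` and `o`. The argument of `f` in `he`
is the load of `r` after agent `i` deviates from `e i` to `o i ∋ r`. -/
lemma PoA_le_two_action (hw : ∀ j, 1 ≤ j → j ≤ n → 0 < w j) (f : ℕ → ℝ)
    {R : Type} [Fintype R] [DecidableEq R] {m : ℕ} (hm : m ≤ n) (v : R → ℝ) (hv : ∀ r, 0 ≤ v r)
    (e o : Fin m → Finset R)
    (he : ∀ i, ∑ r ∈ o i, v r * f (if r ∈ e i then cnt e r else cnt e r + 1)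
      ≤ ∑ r ∈ e i, v r * f (cnt e r))
    (ho : 0 < wel v w o) : PoA f w n ≤ wel v w e / wel v w o := by
  let G : RAGame n :=
    { R := R, v := v, v_nonneg := hv, m := m, m_le := hm, A := fun i => {e i, o i}
      A_ne := fun i => ⟨e i, by simp⟩ }
  let a : G.Alloc := fun i => ⟨e i, by simp [G]⟩
  let b : G.Alloc := fun i => ⟨o i, by simp [G]⟩
  have hb : wel v w o ≤ G.optVal w := G.welfare_le_optVal b
  have hG : 0 < G.optVal w := ho.trans_le hb
  have hnash : G.IsNash f a := by
    rintro i ⟨s, hs⟩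
    rw [G.utility_update]
    have hs' : s = e i ∨ s = o i := by simpa [G] using hs
    rcases hs' with rfl | rfl
    · refine le_of_eq (Finset.sum_congr rfl fun r hr => ?_)
      rw [if_pos (show r ∈ (a i).val from hr)]
      rfl
    · exact he i
  have ha : G.worstNash f w ≤ wel v w e := by
    refine csInf_le ⟨0, ?_⟩ ⟨a, hnash, rfl⟩
    rintro x ⟨c, -, rfl⟩
    exact G.welfare_nonneg hw c
  calc PoA f w n ≤ G.worstNash f w / G.optVal w := PoA_le_ratio hw f G hG
    _ ≤ wel v w e / wel v w o :=
      div_le_div₀ (wel_nonneg hv hm hw e) ha ho hb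

/-- The optimal welfare is bounded below by the contribution of a single resource `r` of value `1`
that exactly one agent uses in `o`. -/
lemma PoA_le_two_action_single (hw : ∀ j, 1 ≤ j → j ≤ n → 0 < w j) (hn : 1 ≤ n) (f : ℕ → ℝ)
    {R : Type} [Fintype R] [DecidableEq R] {m : ℕ} (hm : m ≤ n) (v : R → ℝ) (hv : ∀ r, 0 ≤ v r)
    (e o : Fin m → Finset R)
    (he : ∀ i, ∑ r ∈ o i, v r * f (if r ∈ e i then cnt e r else cnt e r + 1)
      ≤ ∑ r ∈ e i, v r * f (cnt e r))
    (r : R) (hr : cnt o r = 1) (hvr : v r = 1) : PoA f w n ≤ wel v w e / w 1 := by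
  have h1 : w 1 ≤ wel v w o := by
    have := Finset.single_le_sum (s := Finset.univ.filter fun r => 0 < cnt o r)
      (f := fun r => v r * w (cnt o r)) (a := r)
      (fun s hs => mul_nonneg (hv s)
        (hw _ (Finset.mem_filter.1 hs).2 ((cnt_le o s).trans hm)).le) (by simp [hr])
    simpa [wel, hr, hvr] using this
  have hw1 := hw 1 le_rfl hn
  exact (PoA_le_two_action hw f hm v hv e o he (hw1.trans_le h1)).trans
    (div_le_div_of_nonneg_left (wel_nonneg hv hm hw e) hw1 h1)

lemma f_one_pos_of_PoA_pos (hw : ∀ j, 1 ≤ j → j ≤ n → 0 < w j) (hn : 1 ≤ n) (f : ℕ → ℝ)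
    (hf : 0 < PoA f w n) : 0 < f 1 := by
  by_contra! h
  have := PoA_le_two_action_single hw hn f (R := Unit) (m := 1) hn (fun _ => 1) (by simp)
    (fun _ => ∅) (fun _ => {()}) (by simpa [cnt] using h) () (by simp [cnt]) rfl
  simp [wel, cnt] at this
  linarith

/-- The equilibrium has `j` agents sharing one resource of value `1 / M`, each ignoring a private
resource of value `1`. -/
lemma PoA_le_of_large (hw : ∀ j, 1 ≤ j → j ≤ n → 0 < w j) (hn : 1 ≤ n) (f : ℕ → ℝ)
    (h1 : f 1 = 1) {j : ℕ} (hj : 1 ≤ j) (hjn : j ≤ n) {M : ℝ} (hM : 0 < M) (hfj : M ≤ f j) :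
    PoA f w n ≤ w j / M / w 1 := by
  have hc : cnt (fun _ : Fin j => ({none} : Finset (Option (Fin j)))) none = j := by simp [cnt]
  have hc' (i) : cnt (fun _ : Fin j => ({none} : Finset (Option (Fin j)))) (some i) = 0 := by
    simp [cnt]
  have := PoA_le_two_action_single hw hn f (R := Option (Fin j)) (m := j) hjn
    (fun r => r.elim M⁻¹ fun _ => 1)
    (by rintro (_ | _) <;> simp [hM.le])
    (fun _ => {none}) (fun i => {some i})
    (by
      intro i
      simp only [Finset.sum_singleton, hc, hc']
      simp only [Option.elim, Finset.mem_singleton, reduceCtorEq, if_false, zero_add, h1, mul_one]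
      rw [inv_mul_eq_div, one_le_div hM]
      exact hfj)
    (some ⟨0, hj⟩)
    (by simp [cnt, Finset.filter_eq]) rfl
  refine this.trans (le_of_eq ?_)
  have hj0 : 0 < j := hj
  simp [wel, Finset.sum_filter, Fintype.sum_option, hc, hc', hj0]
  field_simp

/-- The equilibrium has `j` agents (with no other choice) on a resource of value `1 / M` and one idle
agent whose only alternative is this resource together with a free one of value `1`. -/
lemma PoA_le_of_neg (hw : ∀ j, 1 ≤ j → j ≤ n → 0 < w j) (hn : 1 ≤ n) (f : ℕ → ℝ)
    (h1 : f 1 = 1) {j : ℕ} (hj : 1 ≤ j) (hjn : j + 1 ≤ n) {M : ℝ} (hM : 0 < M)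
    (hfj : f (j + 1) ≤ -M) :
    PoA f w n ≤ w j / M / w 1 := by
  set e : Fin (j + 1) → Finset Bool := Fin.lastCases ∅ (fun _ => {false}) with he
  set o : Fin (j + 1) → Finset Bool := Fin.lastCases {false, true} (fun _ => {false}) with ho
  have hcard (x : Fin (j + 1) → Finset Bool) (r : Bool) :
      cnt x r = ∑ i, if r ∈ x i then 1 else 0 :=
    Finset.card_filter _ _
  have hef : cnt e false = j := by
    rw [hcard, Fin.sum_univ_castSucc]; simp [e]
  have het : cnt e true = 0 := by
    rw [hcard, Fin.sum_univ_castSucc]; simp [e]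
  have hot : cnt o true = 1 := by
    rw [hcard, Fin.sum_univ_castSucc]; simp [o]
  have := PoA_le_two_action_single hw hn f (R := Bool) (m := j + 1) hjn
    (fun r => if r then 1 else M⁻¹)
    (by rintro (_ | _) <;> simp [hM.le])
    e o
    (by
      intro i
      refine Fin.lastCases ?_ (fun i => ?_) i
      · simp only [e, o, Fin.lastCases_last]
        rw [← he, Finset.sum_pair (by simp)]
        simp only [hef, het]
        simp only [Finset.notMem_empty, if_false, zero_add, h1, Finset.sum_empty, if_true,
          Bool.false_eq_true, mul_one]
        have h2 : M⁻¹ * f (j + 1) ≤ M⁻¹ * (-M) :=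
          mul_le_mul_of_nonneg_left hfj (inv_nonneg.2 hM.le)
        have h3 : M⁻¹ * (-M) = -1 := by field_simp
        linarith
      · simp only [e, o, Fin.lastCases_castSucc]
        rw [← he]
        simp)
    true hot rfl
  refine this.trans (le_of_eq ?_)
  have hj0 : 0 < j := hj
  simp [wel, Finset.sum_filter, hef, het, hj0]
  field_simp

lemma RAGame.isNash_iff_of_scale {G : RAGame n} {f g : ℕ → ℝ} {c : ℝ} (hc : 0 < c)
    (hg : ∀ j, 1 ≤ j → j ≤ n → g j = c * f j) (a : G.Alloc) : G.IsNash f a ↔ G.IsNash g a := by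
  have hU (b : G.Alloc) (i : Fin G.m) : G.utility g b i = c * G.utility f b i := by
    unfold RAGame.utility
    rw [Finset.mul_sum]
    refine Finset.sum_congr rfl fun r hr => ?_
    rw [hg]
    · ring
    · exact Finset.card_pos.2 ⟨i, by simpa using hr⟩
    · exact (cnt_le (fun i => (b i).val) r).trans G.m_le
  refine forall_congr' fun i => forall_congr' fun s => ?_
  have h1 := hU (Function.update a i s) i
  have h2 := hU a i
  exact (mul_le_mul_iff_right₀ hc).symm.trans (by rw [← h1, ← h2])

lemma PoA_eq_of_scale {f g : ℕ → ℝ} {c : ℝ} (hc : 0 < c)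
    (hg : ∀ j, 1 ≤ j → j ≤ n → g j = c * f j) : PoA f w n = PoA g w n := by
  unfold PoA RAGame.worstNash
  simp only [RAGame.isNash_iff_of_scale hc hg]

lemma RAGame.continuous_utility (G : RAGame n) (a : G.Alloc) (i : Fin G.m) :
    Continuous fun f : ℕ → ℝ => G.utility f a i := by
  unfold RAGame.utility
  fun_prop

/-- Upper semicontinuity of the price of anarchy at mechanisms with `f 1 = 1`. -/
lemma eventually_PoA_lt (hw : ∀ j, 1 ≤ j → j ≤ n → 0 < w j) (hn : 1 ≤ n) {f : ℕ → ℝ}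
    (h1 : f 1 = 1) {y : ℝ} (hy : PoA f w n < y) : ∀ᶠ g in nhds f, PoA g w n < y := by
  have hne : { x : ℝ | ∃ G : RAGame n, 0 < G.optVal w ∧
      x = G.worstNash f w / G.optVal w }.Nonempty := by
    let G : RAGame n :=
      { R := Unit, v := fun _ => 1, v_nonneg := by simp, m := 1, m_le := hn, A := fun _ => {{()}}
        A_ne := by simp }
    refine ⟨_, G, ?_, rfl⟩
    let b : G.Alloc := fun i => ⟨{()}, by simp [G]⟩
    refine lt_of_lt_of_le ?_ (G.welfare_le_optVal b)
    rw [G.welfare_eq]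
    have := hw 1 le_rfl hn
    have hc : cnt (fun i => (b i).val) () = 1 := by simp [cnt, b, G]
    simpa [wel, Finset.sum_filter, G, hc] using this
  obtain ⟨_, ⟨G, hG, rfl⟩, hlt⟩ := exists_lt_of_csInf_lt hne hy
  by_cases hN : ∃ a, G.IsNash f a
  · obtain ⟨b, hb⟩ := G.exists_optVal w
    obtain ⟨_, ⟨a, ha, rfl⟩, hay⟩ := exists_lt_of_csInf_lt
      (s := { x : ℝ | ∃ a : G.Alloc, G.IsNash f a ∧ x = G.welfare w a }) (by
        obtain ⟨a, ha⟩ := hN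
        exact ⟨_, a, ha, rfl⟩) ((div_lt_iff₀ hG).1 hlt)
    rw [hb] at hay hG
    have hw1 := hw 1 le_rfl hn
    -- `ε` is small enough for the private resources to keep the welfare ratio below `y`
    obtain ⟨ε, hε, hεy⟩ : ∃ ε : ℝ, 0 < ε ∧
        G.welfare w a + G.m * (ε * w 1) < y * G.welfare w b := by
      set d := y * G.welfare w b - G.welfare w a with hd
      have hd0 : 0 < d := by linarith
      have hm0 : (0 : ℝ) < (G.m + 1) * w 1 := by positivity
      refine ⟨d / ((G.m + 1) * w 1), by positivity, ?_⟩
      have : G.m * (d / ((G.m + 1) * w 1) * w 1) = d * (G.m / (G.m + 1)) := by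
        field_simp
      rw [this]
      have h2 : (G.m : ℝ) / (G.m + 1) < 1 := by
        rw [div_lt_one (by positivity)]; linarith
      have := mul_lt_mul_of_pos_left h2 hd0
      linarith
    let e : Fin G.m → Finset (G.R ⊕ Fin G.m) := fun i => (a i).val.disjSum {i}
    let o : Fin G.m → Finset (G.R ⊕ Fin G.m) := fun i => (b i).val.disjSum ∅
    let v : G.R ⊕ Fin G.m → ℝ := Sum.elim G.v fun _ => ε
    have hv : ∀ r, 0 ≤ v r := by
      rintro (r | r)
      · exact G.v_nonneg r
      · exact hε.le
    have hel (r) : cnt e (Sum.inl r) = G.count a r := by simp [cnt, e, RAGame.count]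
    have her (i) : cnt e (Sum.inr i) = 1 := by simp [cnt, e, Finset.filter_eq]
    have hol (r) : cnt o (Sum.inl r) = G.count b r := by simp [cnt, o, RAGame.count]
    have hor (i) : cnt o (Sum.inr i) = 0 := by simp [cnt, o]
    have hwe : wel v w e = G.welfare w a + G.m * (ε * w 1) := by
      simp [wel, Finset.sum_filter, Fintype.sum_sum_type, hel, her, v, RAGame.welfare]
    have hwo : wel v w o = G.welfare w b := by
      simp [wel, Finset.sum_filter, Fintype.sum_sum_type, hol, hor, v, RAGame.welfare]
    have hev : ∀ᶠ g in nhds f, ∀ i, G.utility g (Function.update a i (b i)) i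
        < G.utility g a i + ε * g 1 := by
      rw [Filter.eventually_all]
      intro i
      have hc1 := G.continuous_utility (Function.update a i (b i)) i
      have hc2 := G.continuous_utility a i
      have hc3 : Continuous fun g : ℕ → ℝ => G.utility g a i + ε * g 1 :=
        hc2.add (by fun_prop)
      refine hc1.continuousAt.eventually_lt hc3.continuousAt ?_
      have := ha i (b i)
      rw [h1]
      linarith
    filter_upwards [hev] with g hg
    have := PoA_le_two_action hw g G.m_le v hv e o
      (by
        intro i
        have h := (hg i).le
        rw [G.utility_update] at h
        have hca (r) : cnt (fun i => (a i).val) r = G.count a r := rfl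
        simp only [e, o, Finset.sum_disjSum, Finset.inl_mem_disjSum]
        simpa [hel, her, hca, v, RAGame.utility, e] using h)
      (by rwa [hwo])
    refine this.trans_lt ?_
    rwa [hwe, hwo, div_lt_iff₀ hG]
  · -- Without an equilibrium for `f` there is none for nearby `g`, and then `worstNash` is
    -- `sInf ∅ = 0` for both.
    have hwN {g : ℕ → ℝ} (h : ∀ a, ¬ G.IsNash g a) : G.worstNash g w = 0 := by
      simp [RAGame.worstNash, h]
    have hev : ∀ᶠ g in nhds f, ∀ a, ¬ G.IsNash g a := by
      rw [Filter.eventually_all]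
      intro a
      have ha : ¬ G.IsNash f a := fun h => hN ⟨a, h⟩
      simp only [RAGame.IsNash, not_forall, not_le] at ha ⊢
      obtain ⟨i, s, his⟩ := ha
      filter_upwards [(G.continuous_utility a i).continuousAt.eventually_lt
        (G.continuous_utility (Function.update a i s) i).continuousAt his] with g hg
      exact ⟨i, s, hg⟩
    filter_upwards [hev] with g hg
    refine (PoA_le_ratio hw g G hG).trans_lt ?_
    rw [hwN hg, ← hwN (not_exists.1 hN)]
    exact hlt

end Games

/-- Lemma 5: the supremum of the price of anarchy over all mechanisms `f ∈ ℝⁿ` is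
attained, by some mechanism with `f_opt(1) ≥ 1`. -/
theorem optimal_mechanism_exists (n : ℕ) (w : ℕ → ℝ) (hn : 1 ≤ n)
    (hw : ∀ j, 1 ≤ j → j ≤ n → 0 < w j) :
    ∃ fopt : ℕ → ℝ, 1 ≤ fopt 1 ∧ ∀ f : ℕ → ℝ, PoA f w n ≤ PoA fopt w n := by
  by_cases H : ∃ f0, 0 < PoA f0 w n
  swap
  · push Not at H
    exact ⟨fun _ => 1, le_rfl, fun f => (H f).trans (PoA_nonneg hw _)⟩
  obtain ⟨f0, hf0⟩ := H
  have hw1 := hw 1 le_rfl hn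
  set δ := PoA f0 w n with hδ
  set S := ∑ j ∈ Finset.Icc 1 n, w j with hS
  have hwS : ∀ j, 1 ≤ j → j ≤ n → w j ≤ S := fun j h h' =>
    Finset.single_le_sum (f := w)
      (fun k hk => (hw k (Finset.mem_Icc.1 hk).1 (Finset.mem_Icc.1 hk).2).le)
      (Finset.mem_Icc.2 ⟨h, h'⟩)
  have hS0 : 0 < S := hw1.trans_le (hwS 1 le_rfl hn)
  -- `C` is chosen so that `w j / C / w 1 < δ` for all `j`
  set C := S / (δ * w 1) + 1 with hC
  have hC1 : 1 ≤ C := by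
    have : 0 < S / (δ * w 1) := by positivity
    linarith
  have hC0 : 0 < C := by linarith
  have hCδ : ∀ j, 1 ≤ j → j ≤ n → w j / C / w 1 < δ := by
    intro j h h'
    rw [div_div, div_lt_iff₀ (by positivity)]
    have h2 : δ * (C * w 1) = S + δ * w 1 := by
      rw [hC]; field_simp
    have := hwS j h h'
    have : 0 < δ * w 1 := by positivity
    linarith
  -- the compact set of normalized mechanisms with entries bounded by `C`, zero off `1, …, n`
  set K : Set (ℕ → ℝ) :=
    Set.univ.pi (fun j => if j = 1 then {1} else if 1 ≤ j ∧ j ≤ n then Set.Icc (-C) C else {0})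
    with hK
  have hKc : IsCompact K := by
    refine isCompact_univ_pi fun j => ?_
    split_ifs
    · exact isCompact_singleton
    · exact isCompact_Icc
    · exact isCompact_singleton
  have hK1 : ∀ f ∈ K, f 1 = 1 := fun f hf => by simpa using hf 1 (Set.mem_univ _)
  -- a mechanism at least as good as `f0` has a representative in `K`
  have hrep : ∀ f, δ ≤ PoA f w n → ∃ g ∈ K, PoA g w n = PoA f w n := by
    intro f hf
    have hf1 := f_one_pos_of_PoA_pos hw hn f (hf0.trans_le hf)
    let g : ℕ → ℝ := fun j => if 1 ≤ j ∧ j ≤ n then (f 1)⁻¹ * f j else 0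
    have hg : ∀ j, 1 ≤ j → j ≤ n → g j = (f 1)⁻¹ * f j := fun j h h' => if_pos ⟨h, h'⟩
    have hP : PoA f w n = PoA g w n := PoA_eq_of_scale (inv_pos.2 hf1) hg
    have hg1 : g 1 = 1 := by rw [hg 1 le_rfl hn]; exact inv_mul_cancel₀ hf1.ne'
    rw [hP] at hf
    refine ⟨g, fun j _ => ?_, hP.symm⟩
    dsimp only
    split_ifs with h h'
    · simpa [h] using hg1
    · obtain ⟨k, rfl⟩ : ∃ k, j = k + 1 := ⟨j - 1, by omega⟩
      have hk : 1 ≤ k := by omega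
      constructor
      · by_contra! hlt
        have := PoA_le_of_neg hw hn g hg1 hk h'.2 hC0 hlt.le
        linarith [hCδ k hk (by omega)]
      · by_contra! hlt
        have := PoA_le_of_large hw hn g hg1 h'.1 h'.2 hC0 hlt.le
        linarith [hCδ (k + 1) h'.1 h'.2]
    · simp [g, h']
  have husc : UpperSemicontinuousOn (fun f => PoA f w n) K := fun f hf y hy =>
    (eventually_PoA_lt hw hn (hK1 f hf) hy).filter_mono nhdsWithin_le_nhds
  obtain ⟨g0, hg0, hg0'⟩ := hrep f0 le_rfl
  obtain ⟨fopt, hfK, hmax⟩ := husc.exists_isMaxOn ⟨g0, hg0⟩ hKc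
  refine ⟨fopt, (hK1 _ hfK).ge, fun f => ?_⟩
  rcases le_total δ (PoA f w n) with h | h
  · obtain ⟨g, hg, hg'⟩ := hrep f h
    rw [← hg']
    exact hmax hg
  · refine h.trans ?_
    rw [hδ, ← hg0']
    exact hmax hg0
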